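/- Let μ be a Borel probability measure on Θ and define p : C(X,ℝ) → ℝ by p(φ) = P(exp φ). Then p is a convex functional: for all φ₁, φ₂ ∈ C(X,ℝ) and all t ∈ [0,1], p(t·φ₁ + (1−t)·φ₂) ≤ t·p(φ₁) + (1−t)·p(φ₂). -/

import Mathlib

open MeasureTheory Filter Topology

variable {X Θ : Type*}

/-- A Borel probability measure on `X × Θ` is holonomic (w.r.t. `τ`) if
`∫ (f(τ_θ(x)) − f(x)) dν̂(x,θ) = 0` for every `f ∈ C(X,ℝ)`. -/
def Holonomic [MeasurableSpace X] [MeasurableSpace Θ] [TopologicalSpace X]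
    (τ : Θ → X → X) (μhat : Measure (X × Θ)) : Prop :=
  ∀ f : C(X, ℝ), ∫ p : X × Θ, (f (τ p.2 p.1) - f p.1) ∂μhat = 0

/-- The variational entropy `h_v(ν) = inf { ∫ log(B_μ(g)/g) dν : g ∈ C(X,ℝ), g > 0 }`,
where `B_μ(g)(x) = ∫_Θ g(τ_θ(x)) dμ(θ)`. -/
noncomputable def varEntropy [MeasurableSpace X] [MeasurableSpace Θ]
    [TopologicalSpace X] [TopologicalSpace Θ]
    (τ : Θ → X → X) (μ : Measure Θ) (ν : Measure X) : ℝ :=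
  sInf {r : ℝ | ∃ g : C(X, ℝ), (∀ x, 0 < g x) ∧
    r = ∫ x, Real.log ((∫ θ, g (τ θ x) ∂μ) / g x) ∂ν}

/-- The topological pressure of `ψ` w.r.t. the a-priori measure `μ`:
`P(ψ) = sup_{ν̂ holonomic} inf_{g > 0} ∫ log(B_ψ(g)/g) dν`, where
`B_ψ(g)(x) = ∫_Θ g(τ_θ(x)) ψ(τ_θ(x)) dμ(θ)` and `ν` is the `X`-marginal of `ν̂`. -/
noncomputable def pressure [MeasurableSpace X] [MeasurableSpace Θ]
    [TopologicalSpace X] [TopologicalSpace Θ]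
    (τ : Θ → X → X) (μ : Measure Θ) (ψ : X → ℝ) : ℝ :=
  sSup {r : ℝ | ∃ νhat : Measure (X × Θ), IsProbabilityMeasure νhat ∧ Holonomic τ νhat ∧
    r = sInf {s : ℝ | ∃ g : C(X, ℝ), (∀ x, 0 < g x) ∧
      s = ∫ x, Real.log ((∫ θ, g (τ θ x) * ψ (τ θ x) ∂μ) / g x) ∂(νhat.map Prod.fst)}}

section Helpers

variable [MetricSpace X] [CompactSpace X] [MeasurableSpace X] [BorelSpace X]
    [MetricSpace Θ] [CompactSpace Θ] [MeasurableSpace Θ] [BorelSpace Θ]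

/-- The transfer operator applied to `exp w`. -/
noncomputable def expTransfer (τ : Θ → X → X) (μ : Measure Θ) (w : C(X, ℝ)) (x : X) : ℝ :=
  ∫ θ, Real.exp (w (τ θ x)) ∂μ

/-- The functional inside the infimum, in logarithmic coordinates `g = exp u`. -/
noncomputable def logFunctional (τ : Θ → X → X) (μ : Measure Θ) (ν : Measure X)
    (u φ : C(X, ℝ)) : ℝ :=
  ∫ x, (Real.log (expTransfer τ μ (u + φ) x) - u x) ∂ν

theorem continuous_expw (τ : Θ → X → X) (hτ : Continuous fun p : Θ × X => τ p.1 p.2)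
    (w : C(X, ℝ)) (x : X) : Continuous fun θ => Real.exp (w (τ θ x)) := by
  have h : Continuous fun θ => τ θ x := hτ.comp (Continuous.prodMk continuous_id continuous_const)
  exact Real.continuous_exp.comp (w.continuous.comp h)

theorem integrable_cont {Y : Type*} [MetricSpace Y] [CompactSpace Y] [MeasurableSpace Y]
    [BorelSpace Y] (μ : Measure Y) [IsFiniteMeasure μ] {f : Y → ℝ} (hf : Continuous f) :
    Integrable f μ :=
  hf.integrable_of_hasCompactSupport (HasCompactSupport.of_compactSpace f)

theorem expTransfer_pos (τ : Θ → X → X) (hτ : Continuous fun p : Θ × X => τ p.1 p.2)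
    (μ : Measure Θ) [IsProbabilityMeasure μ] (w : C(X, ℝ)) (x : X) :
    0 < expTransfer τ μ w x :=
  integral_exp_pos (integrable_cont μ (continuous_expw τ hτ w x))

theorem expTransfer_continuous (τ : Θ → X → X) (hτ : Continuous fun p : Θ × X => τ p.1 p.2)
    (μ : Measure Θ) [IsProbabilityMeasure μ] (w : C(X, ℝ)) :
    Continuous (expTransfer τ μ w) := by
  unfold expTransfer
  refine continuous_of_dominated (bound := fun _ => Real.exp ‖w‖) ?_ ?_ ?_ ?_
  · intro x
    exact (integrable_cont μ (continuous_expw τ hτ w x)).aestronglyMeasurable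
  · intro x
    refine Eventually.of_forall fun θ => ?_
    rw [Real.norm_eq_abs, Real.abs_exp]
    exact Real.exp_le_exp.2 ((le_abs_self _).trans (w.norm_coe_le_norm _))
  · exact integrable_const _
  · refine Eventually.of_forall fun θ => ?_
    have h : Continuous fun x => τ θ x := hτ.comp (Continuous.prodMk continuous_const continuous_id)
    exact Real.continuous_exp.comp (w.continuous.comp h)

theorem logFunctional_integrable (τ : Θ → X → X) (hτ : Continuous fun p : Θ × X => τ p.1 p.2)
    (μ : Measure Θ) [IsProbabilityMeasure μ] (ν : Measure X) [IsProbabilityMeasure ν]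
    (u φ : C(X, ℝ)) :
    Integrable (fun x => Real.log (expTransfer τ μ (u + φ) x) - u x) ν :=
  integrable_cont ν (((expTransfer_continuous τ hτ μ (u + φ)).log
    (fun x => (expTransfer_pos τ hτ μ (u + φ) x).ne')).sub u.continuous)

theorem log_expTransfer_convex (τ : Θ → X → X) (hτ : Continuous fun p : Θ × X => τ p.1 p.2)
    (μ : Measure Θ) [IsProbabilityMeasure μ] (w₁ w₂ w : C(X, ℝ)) (t : ℝ) (ht0 : 0 ≤ t)
    (ht1 : t ≤ 1) (hw : ∀ x, w x = t * w₁ x + (1 - t) * w₂ x) (x : X) :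
    Real.log (expTransfer τ μ w x) ≤
      t * Real.log (expTransfer τ μ w₁ x) + (1 - t) * Real.log (expTransfer τ μ w₂ x) := by
  have p₁ := expTransfer_pos τ hτ μ w₁ x
  have p₂ := expTransfer_pos τ hτ μ w₂ x
  rw [Real.log_le_iff_le_exp (expTransfer_pos τ hτ μ w x)]
  set a := Real.log (expTransfer τ μ w₁ x) with ha
  set b := Real.log (expTransfer τ μ w₂ x) with hb
  have ea : Real.exp a = expTransfer τ μ w₁ x := Real.exp_log p₁
  have eb : Real.exp b = expTransfer τ μ w₂ x := Real.exp_log p₂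
  have i₁ := integrable_cont μ (continuous_expw τ hτ w₁ x)
  have i₂ := integrable_cont μ (continuous_expw τ hτ w₂ x)
  have key : ∀ θ, Real.exp (w (τ θ x)) ≤ Real.exp (t * a + (1 - t) * b) *
      (t * Real.exp (-a) * Real.exp (w₁ (τ θ x)) +
        (1 - t) * Real.exp (-b) * Real.exp (w₂ (τ θ x))) := by
    intro θ
    have hc := convexOn_exp.2 (Set.mem_univ (w₁ (τ θ x) - a)) (Set.mem_univ (w₂ (τ θ x) - b))
      ht0 (sub_nonneg.2 ht1) (by ring)
    simp only [smul_eq_mul] at hc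
    have e : w (τ θ x) = (t * a + (1 - t) * b) +
        (t * (w₁ (τ θ x) - a) + (1 - t) * (w₂ (τ θ x) - b)) := by rw [hw]; ring
    rw [e, Real.exp_add]
    refine mul_le_mul_of_nonneg_left (hc.trans (le_of_eq ?_)) (Real.exp_pos _).le
    rw [sub_eq_add_neg, sub_eq_add_neg (w₂ _), Real.exp_add, Real.exp_add]
    ring
  calc expTransfer τ μ w x ≤ ∫ θ, Real.exp (t * a + (1 - t) * b) *
      (t * Real.exp (-a) * Real.exp (w₁ (τ θ x)) +
        (1 - t) * Real.exp (-b) * Real.exp (w₂ (τ θ x))) ∂μ :=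
        integral_mono (integrable_cont μ (continuous_expw τ hτ w x))
          (((i₁.const_mul _).add (i₂.const_mul _)).const_mul _) key
    _ = Real.exp (t * a + (1 - t) * b) *
        (t * Real.exp (-a) * Real.exp a + (1 - t) * Real.exp (-b) * Real.exp b) := by
        rw [integral_const_mul, integral_add (i₁.const_mul _) (i₂.const_mul _),
          integral_const_mul, integral_const_mul, ea, eb]
        rfl
    _ = Real.exp (t * a + (1 - t) * b) := by
        rw [mul_assoc, mul_assoc (1 - t), ← Real.exp_add, ← Real.exp_add]
        simp

theorem log_expTransfer_le (τ : Θ → X → X) (hτ : Continuous fun p : Θ × X => τ p.1 p.2)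
    (μ : Measure Θ) [IsProbabilityMeasure μ] (w w' : C(X, ℝ)) (c : ℝ)
    (hw : ∀ x, w x ≤ c + w' x) (x : X) :
    Real.log (expTransfer τ μ w x) ≤ c + Real.log (expTransfer τ μ w' x) := by
  have p₁ := expTransfer_pos τ hτ μ w' x
  rw [Real.log_le_iff_le_exp (expTransfer_pos τ hτ μ w x), Real.exp_add, Real.exp_log p₁]
  unfold expTransfer
  rw [← integral_const_mul]
  refine integral_mono (integrable_cont μ (continuous_expw τ hτ w x))
    ((integrable_cont μ (continuous_expw τ hτ w' x)).const_mul _) fun θ => ?_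
  simp only
  rw [← Real.exp_add]
  exact Real.exp_le_exp.2 (hw _)

theorem logFunctional_le (τ : Θ → X → X) (hτ : Continuous fun p : Θ × X => τ p.1 p.2)
    (μ : Measure Θ) [IsProbabilityMeasure μ] (ν : Measure X) [IsProbabilityMeasure ν]
    (u φ φ' : C(X, ℝ)) :
    logFunctional τ μ ν u φ ≤ ‖φ - φ'‖ + logFunctional τ μ ν u φ' := by
  have hc : ‖φ - φ'‖ = ∫ _x : X, ‖φ - φ'‖ ∂ν := by simp
  unfold logFunctional
  rw [hc, ← integral_add (integrable_const _) (logFunctional_integrable τ hτ μ ν u φ')]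
  refine integral_mono (logFunctional_integrable τ hτ μ ν u φ)
    ((integrable_const _).add (logFunctional_integrable τ hτ μ ν u φ')) fun x => ?_
  have := log_expTransfer_le τ hτ μ (u + φ) (u + φ') ‖φ - φ'‖ (fun y => by
    have h := (le_abs_self _).trans ((φ - φ').norm_coe_le_norm y)
    simp only [ContinuousMap.sub_apply, ContinuousMap.add_apply] at h ⊢
    linarith) x
  simp only
  linarith

theorem logFunctional_convex (τ : Θ → X → X) (hτ : Continuous fun p : Θ × X => τ p.1 p.2)
    (μ : Measure Θ) [IsProbabilityMeasure μ] (ν : Measure X) [IsProbabilityMeasure ν]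
    (u₁ u₂ φ₁ φ₂ : C(X, ℝ)) (t : ℝ) (ht0 : 0 ≤ t) (ht1 : t ≤ 1) :
    logFunctional τ μ ν (t • u₁ + (1 - t) • u₂) (t • φ₁ + (1 - t) • φ₂) ≤
      t * logFunctional τ μ ν u₁ φ₁ + (1 - t) * logFunctional τ μ ν u₂ φ₂ := by
  have i₁ := logFunctional_integrable τ hτ μ ν u₁ φ₁
  have i₂ := logFunctional_integrable τ hτ μ ν u₂ φ₂
  unfold logFunctional
  rw [← integral_const_mul, ← integral_const_mul,
    ← integral_add (i₁.const_mul _) (i₂.const_mul _)]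
  refine integral_mono (logFunctional_integrable τ hτ μ ν _ _)
    ((i₁.const_mul _).add (i₂.const_mul _)) fun x => ?_
  have := log_expTransfer_convex τ hτ μ (u₁ + φ₁) (u₂ + φ₂)
    (t • u₁ + (1 - t) • u₂ + (t • φ₁ + (1 - t) • φ₂)) t ht0 ht1 (fun y => by
      simp only [ContinuousMap.add_apply, ContinuousMap.smul_apply, smul_eq_mul]
      ring) x
  simp only [ContinuousMap.add_apply, ContinuousMap.smul_apply, smul_eq_mul]
  linarith

theorem set_eq_range (τ : Θ → X → X) (hτ : Continuous fun p : Θ × X => τ p.1 p.2)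
    (μ : Measure Θ) [IsProbabilityMeasure μ] (ν : Measure X) (φ : C(X, ℝ)) :
    {s : ℝ | ∃ g : C(X, ℝ), (∀ x, 0 < g x) ∧
      s = ∫ x, Real.log ((∫ θ, g (τ θ x) * Real.exp (φ (τ θ x)) ∂μ) / g x) ∂ν} =
    Set.range fun u => logFunctional τ μ ν u φ := by
  have main : ∀ u g : C(X, ℝ), (∀ x, g x = Real.exp (u x)) →
      logFunctional τ μ ν u φ =
        ∫ x, Real.log ((∫ θ, g (τ θ x) * Real.exp (φ (τ θ x)) ∂μ) / g x) ∂ν := by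
    intro u g hg
    unfold logFunctional
    congr 1
    funext x
    have e : (∫ θ, g (τ θ x) * Real.exp (φ (τ θ x)) ∂μ) = expTransfer τ μ (u + φ) x := by
      unfold expTransfer
      congr 1
      funext θ
      rw [hg, ← Real.exp_add]
      rfl
    rw [e, hg, Real.log_div (expTransfer_pos τ hτ μ _ x).ne' (Real.exp_pos _).ne', Real.log_exp]
  ext s
  constructor
  · rintro ⟨g, hg, rfl⟩
    refine ⟨⟨fun x => Real.log (g x), g.continuous.log fun x => (hg x).ne'⟩, ?_⟩
    exact main _ g fun x => (Real.exp_log (hg x)).symm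
  · rintro ⟨u, rfl⟩
    refine ⟨⟨fun x => Real.exp (u x), Real.continuous_exp.comp u.continuous⟩,
      fun x => Real.exp_pos _, ?_⟩
    exact main u _ fun x => rfl

theorem bdd_transfer (τ : Θ → X → X) (hτ : Continuous fun p : Θ × X => τ p.1 p.2)
    (μ : Measure Θ) [IsProbabilityMeasure μ] (ν : Measure X) [IsProbabilityMeasure ν]
    (φ φ' : C(X, ℝ)) (h : BddBelow (Set.range fun u => logFunctional τ μ ν u φ)) :
    BddBelow (Set.range fun u => logFunctional τ μ ν u φ') := by
  obtain ⟨c, hc⟩ := h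
  refine ⟨c - ‖φ - φ'‖, ?_⟩
  rintro _ ⟨u, rfl⟩
  have h1 := hc ⟨u, rfl⟩
  have h2 := logFunctional_le τ hτ μ ν u φ φ'
  simp only at h1 ⊢
  linarith

theorem inf_convex (τ : Θ → X → X) (hτ : Continuous fun p : Θ × X => τ p.1 p.2)
    (μ : Measure Θ) [IsProbabilityMeasure μ] (ν : Measure X) [IsProbabilityMeasure ν]
    (φ₁ φ₂ : C(X, ℝ)) (t : ℝ) (ht0 : 0 ≤ t) (ht1 : t ≤ 1) :
    sInf (Set.range fun u => logFunctional τ μ ν u (t • φ₁ + (1 - t) • φ₂)) ≤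
      t * sInf (Set.range fun u => logFunctional τ μ ν u φ₁) +
      (1 - t) * sInf (Set.range fun u => logFunctional τ μ ν u φ₂) := by
  by_cases hb : BddBelow (Set.range fun u => logFunctional τ μ ν u (t • φ₁ + (1 - t) • φ₂))
  · refine le_of_forall_pos_le_add fun ε hε => ?_
    obtain ⟨_, ⟨u₁, rfl⟩, h₁⟩ := Real.lt_sInf_add_pos
      (Set.range_nonempty fun u => logFunctional τ μ ν u φ₁) hε
    obtain ⟨_, ⟨u₂, rfl⟩, h₂⟩ := Real.lt_sInf_add_pos
      (Set.range_nonempty fun u => logFunctional τ μ ν u φ₂) hε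
    have h := csInf_le hb ⟨t • u₁ + (1 - t) • u₂, rfl⟩
    have hc := logFunctional_convex τ hτ μ ν u₁ u₂ φ₁ φ₂ t ht0 ht1
    have m₁ := mul_le_mul_of_nonneg_left h₁.le ht0
    have m₂ := mul_le_mul_of_nonneg_left h₂.le (sub_nonneg.2 ht1)
    simp only at h m₁ m₂
    linarith
  · rw [Real.sInf_of_not_bddBelow hb,
      Real.sInf_of_not_bddBelow fun h => hb (bdd_transfer τ hτ μ ν _ _ h),
      Real.sInf_of_not_bddBelow fun h => hb (bdd_transfer τ hτ μ ν _ _ h)]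
    simp

theorem inf_le_norm (τ : Θ → X → X) (hτ : Continuous fun p : Θ × X => τ p.1 p.2)
    (μ : Measure Θ) [IsProbabilityMeasure μ] (ν : Measure X) [IsProbabilityMeasure ν]
    (φ : C(X, ℝ)) :
    sInf (Set.range fun u => logFunctional τ μ ν u φ) ≤ ‖φ‖ := by
  by_cases hb : BddBelow (Set.range fun u => logFunctional τ μ ν u φ)
  · refine (csInf_le hb ⟨0, rfl⟩).trans ?_
    have h := logFunctional_le τ hτ μ ν 0 φ 0
    have h0 : logFunctional τ μ ν 0 0 = 0 := by simp [logFunctional, expTransfer]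
    rw [h0] at h
    simpa using h
  · rw [Real.sInf_of_not_bddBelow hb]
    exact norm_nonneg _

theorem pressure_eq (τ : Θ → X → X) (hτ : Continuous fun p : Θ × X => τ p.1 p.2)
    (μ : Measure Θ) [IsProbabilityMeasure μ] (φ : C(X, ℝ)) :
    pressure τ μ (fun x => Real.exp (φ x)) =
      sSup {r : ℝ | ∃ νhat : Measure (X × Θ), IsProbabilityMeasure νhat ∧ Holonomic τ νhat ∧
        r = sInf (Set.range fun u => logFunctional τ μ (νhat.map Prod.fst) u φ)} := by
  unfold pressure
  simp only [set_eq_range τ hτ μ]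

theorem le_pressure (τ : Θ → X → X) (hτ : Continuous fun p : Θ × X => τ p.1 p.2)
    (μ : Measure Θ) [IsProbabilityMeasure μ] (φ : C(X, ℝ)) (νhat : Measure (X × Θ))
    (hp : IsProbabilityMeasure νhat) (hh : Holonomic τ νhat) :
    sInf (Set.range fun u => logFunctional τ μ (νhat.map Prod.fst) u φ) ≤
      pressure τ μ (fun x => Real.exp (φ x)) := by
  rw [pressure_eq τ hτ μ φ]
  refine le_csSup ⟨‖φ‖, ?_⟩ ⟨νhat, hp, hh, rfl⟩
  rintro _ ⟨ρ, hρ, -, rfl⟩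
  haveI : IsProbabilityMeasure (ρ.map Prod.fst) :=
    Measure.isProbabilityMeasure_map measurable_fst.aemeasurable
  exact inf_le_norm τ hτ μ _ φ

end Helpers

/-- the pressure functional `p(φ) = P(exp φ)` on `C(X,ℝ)` is convex. -/
theorem pressure_functional_convex
    [MetricSpace X] [CompactSpace X] [MeasurableSpace X] [BorelSpace X] [Nonempty X]
    [MetricSpace Θ] [CompactSpace Θ] [MeasurableSpace Θ] [BorelSpace Θ] [Nonempty Θ]
    (τ : Θ → X → X) (hτ : Continuous fun p : Θ × X => τ p.1 p.2)
    (μ : Measure Θ) [IsProbabilityMeasure μ]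
    (φ₁ φ₂ : C(X, ℝ)) (t : ℝ) (ht0 : 0 ≤ t) (ht1 : t ≤ 1) :
    pressure τ μ (fun x => Real.exp (t * φ₁ x + (1 - t) * φ₂ x)) ≤
      t * pressure τ μ (fun x => Real.exp (φ₁ x)) +
        (1 - t) * pressure τ μ (fun x => Real.exp (φ₂ x)) := by
  have e : (fun x => Real.exp (t * φ₁ x + (1 - t) * φ₂ x)) =
      fun x => Real.exp ((t • φ₁ + (1 - t) • φ₂ : C(X, ℝ)) x) := by
    funext x
    simp
  rw [e]
  rcases Set.eq_empty_or_nonempty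
    {νhat : Measure (X × Θ) | IsProbabilityMeasure νhat ∧ Holonomic τ νhat} with h | ⟨ρ, hρ⟩
  · have z : ∀ φ : C(X, ℝ), pressure τ μ (fun x => Real.exp (φ x)) = 0 := by
      intro φ
      rw [pressure_eq τ hτ μ φ]
      convert Real.sSup_empty
      refine Set.eq_empty_of_forall_notMem ?_
      rintro _ ⟨ρ, h1, h2, -⟩
      have : ρ ∈ (∅ : Set (Measure (X × Θ))) := h ▸ ⟨h1, h2⟩
      exact this
    rw [z, z, z]
    simp
  · rw [pressure_eq τ hτ μ (t • φ₁ + (1 - t) • φ₂)]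
    refine csSup_le ⟨_, ρ, hρ.1, hρ.2, rfl⟩ ?_
    rintro _ ⟨νhat, hp, hh, rfl⟩
    haveI : IsProbabilityMeasure (νhat.map Prod.fst) :=
      Measure.isProbabilityMeasure_map measurable_fst.aemeasurable
    refine (inf_convex τ hτ μ _ φ₁ φ₂ t ht0 ht1).trans ?_
    exact add_le_add
      (mul_le_mul_of_nonneg_left (le_pressure τ hτ μ φ₁ νhat hp hh) ht0)
      (mul_le_mul_of_nonneg_left (le_pressure τ hτ μ φ₂ νhat hp hh) (sub_nonneg.2 ht1))
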